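/- Let μ ∈ M(0,1) with orthonormal polynomials l_n. Then for every fixed integer ν, the functions z ↦ ∫ l_{n+ν}(x) l_n(x)/(z−x) dμ(x) converge, as n → ∞, to 1/(φ(z)^{|ν|}·√(z²−1)) uniformly on every compact subset of ℂ̄∖S_μ. -/

import Mathlib

open MeasureTheory Polynomial Filter Topology Set
open scoped Classical

/-- The branch of `√(z²-1)` on `ℂ ∖ [-1,1]` that is positive for `z > 1`. -/
noncomputable def sqrtB (z : ℂ) : ℂ := z * (1 - 1 / z ^ 2) ^ ((1 : ℂ) / 2)

/-- `φ(z) = z + √(z²-1)`, the conformal map of `ℂ ∖ [-1,1]` onto the exterior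
of the closed unit disk. -/
noncomputable def phi (z : ℂ) : ℂ := z + sqrtB z

/-- The support of a measure on `ℝ`: points all of whose neighborhoods have
positive measure. -/
def msupp (μ : Measure ℝ) : Set ℝ := {x | ∀ U ∈ nhds x, μ U ≠ 0}

/-- The support `S_μ`, viewed as a subset of `ℂ`. -/
def msuppC (μ : Measure ℝ) : Set ℂ := Complex.ofReal '' msupp μ

/-- `l` is the sequence of orthonormal polynomials of the measure `μ`:
degree `n`, positive leading coefficient, `∫ l_m l_n dμ = δ_{mn}`. -/
structure IsOrthonormalPolys (μ : Measure ℝ) (l : ℕ → Polynomial ℝ) : Prop where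
  natDegree_eq : ∀ n, (l n).natDegree = n
  leadingCoeff_pos : ∀ n, 0 < (l n).leadingCoeff
  orthonormal : ∀ m n, ∫ x, (l m).eval x * (l n).eval x ∂μ = if m = n then 1 else 0

/-- `μ ∈ M(0,1)`: the recurrence coefficients of the orthonormal polynomials
`l_n` satisfy `a_n → 1/2`, `b_n → 0`, where
`x·l_n = a_{n+1} l_{n+1} + b_n l_n + a_n l_{n-1}`. -/
structure IsM01 (μ : Measure ℝ) (l : ℕ → Polynomial ℝ) (a b : ℕ → ℝ) : Prop where
  onp : IsOrthonormalPolys μ l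
  recurrence_zero : X * l 0 = a 1 • l 1 + b 0 • l 0
  recurrence : ∀ n : ℕ,
    X * l (n + 1) = a (n + 2) • l (n + 2) + b (n + 1) • l (n + 1) + a (n + 1) • l n
  tendsto_a : Tendsto a atTop (nhds (1 / 2))
  tendsto_b : Tendsto b atTop (nhds 0)

/-! Write `G_k` for the Cauchy transform of `e_{n+k} e_n`, that is, the matrix entry `(n + k, n)` of
the resolvent `(z - x)⁻¹` in the orthonormal system `e`. By Bessel's inequality the columns
`k ↦ G_k` are bounded in `ℓ²`, locally uniformly in `z ∉ S_μ`, so they lie in a compact set for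
pointwise convergence. The three-term recurrence passes to the limit: every cluster point `g`, as
`n → ∞` and `z → z₀`, is square summable and solves `z₀ g_k - (g_{k+1} + g_{k-1}) / 2 = δ_{k,0}`.
The only decaying solution is `φ(z₀)^{-|k|} / √(z₀² - 1)`, and its existence forces `|φ(z₀)| > 1`.
Uniformity up to `∞` holds because both sides are `O(1/|z|)`. -/

section UniformConvergence

variable {ι X Y : Type*} [UniformSpace Y] {f : ι → X → Y} {g : X → Y} {p : Filter ι}

lemma tendstoUniformlyOnFilter_of_tendsto_nhds {q : Filter X} {c : Y}
    (hf : Tendsto (fun r : ι × X => f r.1 r.2) (p ×ˢ q) (𝓝 c)) (hg : Tendsto g q (𝓝 c)) :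
    TendstoUniformlyOnFilter f g p q :=
  tendstoUniformlyOnFilter_iff_tendsto.2 <|
    ((hg.comp tendsto_snd).prodMk_nhds hf).mono_right (nhds_le_uniformity c)

lemma tendstoUniformlyOn_of_tendstoLocallyUniformlyOn_of_cocompact [TopologicalSpace X]
    {s : Set X} (hs : IsClosed s) (hloc : TendstoLocallyUniformlyOn f g p s)
    (hinfty : TendstoUniformlyOnFilter f g p (cocompact X)) :
    TendstoUniformlyOn f g p s := by
  intro u hu
  obtain ⟨P, hP, Q, hQ, hPQ⟩ := eventually_prod_iff.1 (hinfty u hu)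
  obtain ⟨K, hK, hKQ⟩ := mem_cocompact.1 hQ
  have hunif : TendstoUniformlyOn f g p (K ∩ s) :=
    (tendstoLocallyUniformlyOn_iff_tendstoUniformlyOn_of_compact (hK.inter_right hs)).1
      (hloc.mono inter_subset_right)
  filter_upwards [hP, hunif u hu] with n hn hnear x hx
  by_cases hxK : x ∈ K
  · exact hnear x ⟨hxK, hx⟩
  · exact hPQ hn (hKQ hxK)

end UniformConvergence

lemma tendsto_cofinite_zero_of_sum_sq_norm_le {ι E : Type*} [SeminormedAddGroup E] {g : ι → E}
    {C : ℝ} (hg : ∀ s : Finset ι, ∑ i ∈ s, ‖g i‖ ^ 2 ≤ C) : Tendsto g cofinite (𝓝 0) := by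
  have hsq : Tendsto (fun i => ‖g i‖ ^ 2) cofinite (𝓝 0) :=
    (summable_of_sum_le (fun i => sq_nonneg ‖g i‖) hg).tendsto_cofinite_zero
  rw [tendsto_zero_iff_norm_tendsto_zero]
  simpa using hsq.sqrt

section JoukowskiMap

lemma sqrtB_eq_mul_sqrt (z : ℂ) : sqrtB z = z * Complex.sqrt (1 - 1 / z ^ 2) := by
  rw [sqrtB, Complex.sqrt, one_div (2 : ℂ)]

lemma sqrtB_sq {z : ℂ} (hz : z ≠ 0) : sqrtB z ^ 2 = z ^ 2 - 1 := by
  rw [sqrtB_eq_mul_sqrt, mul_pow, Complex.sqrt, Complex.cpow_ofNat_inv_pow]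
  field_simp

lemma inv_phi {z : ℂ} (hz : z ≠ 0) : (phi z)⁻¹ = z - sqrtB z :=
  inv_eq_of_mul_eq_one_right (by unfold phi; linear_combination -sqrtB_sq hz)

lemma phi_add_inv_phi {z : ℂ} (hz : z ≠ 0) : phi z + (phi z)⁻¹ = 2 * z := by
  rw [inv_phi hz, phi]
  ring

lemma phi_sub_inv_phi {z : ℂ} (hz : z ≠ 0) : phi z - (phi z)⁻¹ = 2 * sqrtB z := by
  rw [inv_phi hz, phi]
  ring

lemma sq_norm_phi_sub_sq_norm_inv_phi {z : ℂ} (hz : z ≠ 0) :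
    ‖phi z‖ ^ 2 - ‖(phi z)⁻¹‖ ^ 2 =
      4 * ‖z‖ ^ 2 * √((‖1 - 1 / z ^ 2‖ + (1 - 1 / z ^ 2).re) / 2) := by
  have hphi : phi z = z * (1 + Complex.sqrt (1 - 1 / z ^ 2)) := by
    rw [phi, sqrtB_eq_mul_sqrt]
    ring
  have hinv : (phi z)⁻¹ = z * (1 - Complex.sqrt (1 - 1 / z ^ 2)) := by
    rw [inv_phi hz, sqrtB_eq_mul_sqrt]
    ring
  have hparallel (s : ℂ) : ‖1 + s‖ ^ 2 - ‖1 - s‖ ^ 2 = 4 * s.re := by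
    simp only [Complex.sq_norm, Complex.normSq_apply, Complex.add_re, Complex.add_im,
      Complex.sub_re, Complex.sub_im, Complex.one_re, Complex.one_im]
    ring
  rw [hinv, hphi, norm_mul, norm_mul, mul_pow, mul_pow, ← mul_sub, hparallel,
    ← Complex.cpow_inv_two_re, Complex.sqrt]
  ring

lemma one_le_norm_phi {z : ℂ} (hz : z ≠ 0) : 1 ≤ ‖phi z‖ := by
  have hle : ‖(phi z)⁻¹‖ ^ 2 ≤ ‖phi z‖ ^ 2 := by
    rw [← sub_nonneg, sq_norm_phi_sub_sq_norm_inv_phi hz]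
    positivity
  by_contra! hlt
  have hne : phi z ≠ 0 := fun h => hz (by simpa [h] using phi_add_inv_phi hz)
  have hinv : 1 < ‖(phi z)⁻¹‖ := norm_inv (phi z) ▸ (one_lt_inv₀ (norm_pos_iff.2 hne)).2 hlt
  exact (hlt.trans hinv).not_ge (le_of_sq_le_sq hle (norm_nonneg _))

lemma ne_zero_of_one_lt_norm_phi {z : ℂ} (hz : 1 < ‖phi z‖) : z ≠ 0 := by
  rintro rfl
  norm_num [phi, sqrtB] at hz

lemma one_sub_one_div_sq_mem_slitPlane {z : ℂ} (hz : 1 < ‖phi z‖) :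
    1 - 1 / z ^ 2 ∈ Complex.slitPlane := by
  have hz0 := ne_zero_of_one_lt_norm_phi hz
  have hinv : ‖(phi z)⁻¹‖ < 1 := norm_inv (phi z) ▸ inv_lt_one_of_one_lt₀ hz
  have hpos : 0 < 4 * ‖z‖ ^ 2 * √((‖1 - 1 / z ^ 2‖ + (1 - 1 / z ^ 2).re) / 2) := by
    rw [← sq_norm_phi_sub_sq_norm_inv_phi hz0, sub_pos]
    exact pow_lt_pow_left₀ (hinv.trans hz) (norm_nonneg _) two_ne_zero
  by_contra hslit
  rw [Complex.mem_slitPlane_iff_not_le_zero, not_not] at hslit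
  have hnorm : ‖1 - 1 / z ^ 2‖ = -(1 - 1 / z ^ 2).re := by
    rw [← Complex.abs_re_eq_norm.2 (Complex.nonpos_iff.1 hslit).2,
      abs_of_nonpos (Complex.nonpos_iff.1 hslit).1]
  rw [hnorm, neg_add_cancel, zero_div, Real.sqrt_zero, mul_zero] at hpos
  exact hpos.false

lemma continuousAt_sqrtB {z : ℂ} (hz : 1 < ‖phi z‖) : ContinuousAt sqrtB z := by
  have hslit := one_sub_one_div_sq_mem_slitPlane hz
  have hz0 := ne_zero_of_one_lt_norm_phi hz
  have hdiv : ContinuousAt (fun z : ℂ => 1 - 1 / z ^ 2) z := by fun_prop (disch := simpa)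
  exact continuousAt_id.mul (hdiv.cpow continuousAt_const hslit)

lemma sqrtB_ne_zero {z : ℂ} (hz : 1 < ‖phi z‖) : sqrtB z ≠ 0 := by
  intro hzero
  have hsub := phi_sub_inv_phi (ne_zero_of_one_lt_norm_phi hz)
  rw [hzero, mul_zero, sub_eq_zero] at hsub
  have hinv : ‖(phi z)⁻¹‖ < 1 := norm_inv (phi z) ▸ inv_lt_one_of_one_lt₀ hz
  exact (hinv.trans hz).ne (congrArg norm hsub.symm)

end JoukowskiMap

section FreeGreenFunction

/-- The Green function `(z - J₀)⁻¹(k, 0)` of the free Jacobi operator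
`(J₀ g)(k) = (g (k + 1) + g (k - 1)) / 2` on `ℤ`; as a function of `z` it is the limit in the
theorem. -/
noncomputable def freeGreen (k : ℤ) (z : ℂ) : ℂ := 1 / (phi z ^ k.natAbs * sqrtB z)

/-- `g` solves `(z - J₀) g = δ₀` and vanishes at infinity, where `J₀` is the free Jacobi operator
on `ℤ`. -/
structure IsFreeGreenFunction (z : ℂ) (g : ℤ → ℂ) : Prop where
  tendsto_zero : Tendsto g cofinite (𝓝 0)
  mul_sub_eq : ∀ k, z * g k - (g (k + 1) + g (k - 1)) / 2 = if k = 0 then 1 else 0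

lemma eq_zero_of_tendsto_zero_of_succ_eq_mul {𝕜 : Type*} [NormedField 𝕜] {w : 𝕜} (hw : 1 ≤ ‖w‖)
    {g : ℕ → 𝕜} (hg : Tendsto g atTop (𝓝 0)) (hrec : ∀ k, g (k + 1) = w * g k) : g 0 = 0 := by
  have hmono : Monotone fun k => ‖g k‖ := monotone_nat_of_le_succ fun k => by
    rw [hrec, norm_mul]
    exact le_mul_of_one_le_left (norm_nonneg _) hw
  have hzero : Tendsto (fun k => ‖g k‖) atTop (𝓝 0) := by simpa using hg.norm
  exact norm_le_zero_iff.1 (hmono.ge_of_tendsto hzero 0)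

lemma eq_inv_pow_mul_of_tendsto_zero {𝕜 : Type*} [NormedField 𝕜] {w : 𝕜} (hw : 1 ≤ ‖w‖)
    {g : ℕ → 𝕜} (hg : Tendsto g atTop (𝓝 0))
    (hrec : ∀ k, g (k + 2) + g k = (w + w⁻¹) * g (k + 1)) (k : ℕ) :
    g k = w⁻¹ ^ k * g 0 := by
  have hw0 : w ≠ 0 := norm_pos_iff.1 (one_pos.trans_le hw)
  -- The difference cancels the decaying solution `w⁻¹ ^ k`, leaving a multiple of `w ^ k`.
  have hstep (k : ℕ) : g (k + 1) - w⁻¹ * g k = 0 := by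
    refine eq_zero_of_tendsto_zero_of_succ_eq_mul hw
      (g := fun j => g (k + j + 1) - w⁻¹ * g (k + j)) ?_ fun j => ?_
    · have hshift : Tendsto (fun j => g (k + j)) atTop (𝓝 0) := by
        simpa only [add_comm k] using (tendsto_add_atTop_iff_nat k).2 hg
      simpa [add_assoc] using ((tendsto_add_atTop_iff_nat 1).2 hshift).sub (hshift.const_mul w⁻¹)
    · have h := hrec (k + j)
      have hinv : w * w⁻¹ = 1 := mul_inv_cancel₀ hw0
      rw [← add_assoc k j 1]
      linear_combination h + g (k + j) * hinv
  induction k with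
  | zero => simp
  | succ k ih => rw [sub_eq_zero.1 (hstep k), ih, pow_succ', mul_assoc]

namespace IsFreeGreenFunction

variable {z w : ℂ} {g : ℤ → ℂ}

lemma neg (h : IsFreeGreenFunction z g) : IsFreeGreenFunction z fun k => g (-k) where
  tendsto_zero := h.tendsto_zero.comp neg_injective.tendsto_cofinite
  mul_sub_eq k := by
    have hk := h.mul_sub_eq (-k)
    simp only [neg_eq_zero] at hk
    rw [← hk, neg_add', neg_sub', sub_neg_eq_add, add_comm (g _)]

lemma apply_natCast (h : IsFreeGreenFunction z g) (hw : 1 ≤ ‖w‖) (hz : w + w⁻¹ = 2 * z) (k : ℕ) :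
    g k = w⁻¹ ^ k * g 0 := by
  refine eq_inv_pow_mul_of_tendsto_zero hw (g := fun k : ℕ => g k) ?_ (fun k => ?_) k
  · rw [← Nat.cofinite_eq_atTop]
    exact h.tendsto_zero.comp Nat.cast_injective.tendsto_cofinite
  · have hk := h.mul_sub_eq (k + 1)
    rw [if_neg (by lia), add_sub_cancel_right, add_assoc, one_add_one_eq_two] at hk
    push_cast
    rw [hz]
    linear_combination -2 * hk

lemma apply_int (h : IsFreeGreenFunction z g) (hw : 1 ≤ ‖w‖) (hz : w + w⁻¹ = 2 * z) (k : ℤ) :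
    g k = w⁻¹ ^ k.natAbs * g 0 := by
  obtain ⟨m, rfl | rfl⟩ := k.eq_nat_or_neg
  · simpa using h.apply_natCast hw hz m
  · simpa using h.neg.apply_natCast hw hz m

lemma apply_zero_mul (h : IsFreeGreenFunction z g) (hw : 1 ≤ ‖w‖) (hz : w + w⁻¹ = 2 * z) :
    g 0 * (w - w⁻¹) = 2 := by
  have h0 := h.mul_sub_eq 0
  rw [h.apply_int hw hz (0 + 1), h.apply_int hw hz (0 - 1)] at h0
  norm_num at h0
  linear_combination 2 * h0 + g 0 * hz

lemma one_lt_norm (h : IsFreeGreenFunction z g) (hw : 1 ≤ ‖w‖) (hz : w + w⁻¹ = 2 * z) :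
    1 < ‖w‖ := by
  refine hw.lt_of_ne fun hw1 => ?_
  have hg0 : g 0 = 0 := by
    refine eq_zero_of_tendsto_zero_of_succ_eq_mul (w := w⁻¹) (g := fun k : ℕ => g k)
      (by simp [← hw1]) ?_ fun k => ?_
    · rw [← Nat.cofinite_eq_atTop]
      exact h.tendsto_zero.comp Nat.cast_injective.tendsto_cofinite
    · rw [h.apply_natCast hw hz, h.apply_natCast hw hz k, pow_succ', mul_assoc]
  simpa [hg0] using h.apply_zero_mul hw hz

lemma ne_zero (h : IsFreeGreenFunction z g) : z ≠ 0 := by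
  rintro rfl
  simpa using h.one_lt_norm (w := Complex.I) (by simp) (by simp)

lemma one_lt_norm_phi (h : IsFreeGreenFunction z g) : 1 < ‖phi z‖ :=
  h.one_lt_norm (one_le_norm_phi h.ne_zero) (phi_add_inv_phi h.ne_zero)

lemma eq_freeGreen (h : IsFreeGreenFunction z g) : g = fun k => freeGreen k z := by
  have hw := one_le_norm_phi h.ne_zero
  have hz := phi_add_inv_phi h.ne_zero
  have h0 := h.apply_zero_mul hw hz
  rw [phi_sub_inv_phi h.ne_zero] at h0
  have hg0 : g 0 = (sqrtB z)⁻¹ := eq_inv_of_mul_eq_one_left (by linear_combination h0 / 2)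
  funext k
  rw [h.apply_int hw hz, hg0, freeGreen, one_div, mul_inv, inv_pow]

end IsFreeGreenFunction

lemma continuousAt_freeGreen (k : ℤ) {z : ℂ} (hz : 1 < ‖phi z‖) :
    ContinuousAt (freeGreen k) z := by
  have hphi : phi z ≠ 0 := norm_pos_iff.1 (one_pos.trans hz)
  have hsqrtB := continuousAt_sqrtB hz
  exact continuousAt_const.div (((continuousAt_id.add hsqrtB).pow _).mul hsqrtB)
    (mul_ne_zero (pow_ne_zero _ hphi) (sqrtB_ne_zero hz))

lemma norm_freeGreen_le (k : ℤ) {z : ℂ} (hz : 1 < ‖z‖) : ‖freeGreen k z‖ ≤ (‖z‖ - 1)⁻¹ := by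
  have hz0 : z ≠ 0 := norm_pos_iff.1 (one_pos.trans hz)
  have hphi := one_le_norm_phi hz0
  have hsqrtB : ‖z‖ - 1 ≤ ‖sqrtB z‖ := by
    have hsub : sqrtB z = z - (phi z)⁻¹ := by rw [inv_phi hz0, sub_sub_cancel]
    have hinv : ‖(phi z)⁻¹‖ ≤ 1 := norm_inv (phi z) ▸ inv_le_one_of_one_le₀ hphi
    rw [hsub]
    exact (sub_le_sub_left hinv _).trans (norm_sub_norm_le _ _)
  rw [freeGreen, one_div, norm_inv, norm_mul, norm_pow]
  exact inv_anti₀ (sub_pos.2 hz)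
    (hsqrtB.trans (le_mul_of_one_le_left (norm_nonneg _) (one_le_pow₀ hphi)))

lemma tendsto_inv_norm_sub_cocompact (r : ℝ) :
    Tendsto (fun z : ℂ => (‖z‖ - r)⁻¹) (cocompact ℂ) (𝓝 0) :=
  (tendsto_atTop_add_const_right _ (-r) (tendsto_norm_cocompact_atTop (E := ℂ))).inv_tendsto_atTop

lemma tendsto_freeGreen_cocompact (k : ℤ) : Tendsto (freeGreen k) (cocompact ℂ) (𝓝 0) := by
  refine squeeze_zero_norm' ?_ (tendsto_inv_norm_sub_cocompact 1)
  filter_upwards [(tendsto_norm_cocompact_atTop (E := ℂ)).eventually_gt_atTop 1] with z hz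
  exact norm_freeGreen_le k hz

end FreeGreenFunction

section Support

variable (μ : Measure ℝ)

lemma msupp_eq_support : msupp μ = μ.support := by
  ext x
  simp only [msupp, Measure.mem_support_iff_forall, pos_iff_ne_zero, mem_ofPred_eq]

lemma ae_mem_msupp : ∀ᵐ x ∂μ, x ∈ msupp μ :=
  msupp_eq_support μ ▸ Measure.support_mem_ae

lemma isClosed_msuppC : IsClosed (msuppC μ) :=
  Complex.isometry_ofReal.isClosedEmbedding.isClosedMap _
    (msupp_eq_support μ ▸ Measure.isClosed_support)

variable {μ}

lemma exists_pos_forall_ae_le_norm_sub {z₀ : ℂ} (hz₀ : z₀ ∉ msuppC μ) :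
    ∃ d > 0, ∀ᶠ z : ℂ in 𝓝 z₀, ∀ᵐ x : ℝ ∂μ, d ≤ ‖z - x‖ := by
  obtain ⟨r, hr, hball⟩ :=
    Metric.isOpen_iff.1 (isClosed_msuppC μ).isOpen_compl z₀ hz₀
  refine ⟨r / 2, half_pos hr, ?_⟩
  filter_upwards [Metric.ball_mem_nhds z₀ (half_pos hr)] with z hz
  filter_upwards [ae_mem_msupp μ] with x hx
  have hx₀ : r ≤ dist z₀ x := by
    rw [dist_comm]
    exact not_lt.1 fun hlt => hball hlt (mem_image_of_mem _ hx)
  rw [← dist_eq_norm]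
  linarith [dist_triangle z₀ z x, Metric.mem_ball'.1 hz]

lemma memLp_of_isCompact_msupp [IsFiniteMeasure μ] (hμ : IsCompact (msupp μ)) {E : Type*}
    [NormedAddCommGroup E] {f : ℝ → E} (hf : Continuous f) (q : ENNReal) : MemLp f q μ := by
  obtain ⟨C, hC⟩ := hμ.exists_bound_of_continuousOn hf.continuousOn
  exact .of_bound hf.aestronglyMeasurable C ((ae_mem_msupp μ).mono hC)

end Support

section Bessel

variable {α E : Type*} {m : MeasurableSpace α} {μ : Measure α} [NormedAddCommGroup E]

lemma sq_norm_toLp {f : α → E} (hf : MemLp f 2 μ) : ‖hf.toLp f‖ ^ 2 = ∫ x, ‖f x‖ ^ 2 ∂μ := by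
  rw [Lp.norm_toLp, toReal_eLpNorm hf.1,
    lpNorm_eq_integral_norm_rpow_toReal two_ne_zero ENNReal.ofNat_ne_top hf.1]
  simp only [ENNReal.toReal_ofNat, Real.rpow_ofNat, ← one_div, ← Real.sqrt_eq_rpow]
  exact Real.sq_sqrt (integral_nonneg fun x => sq_nonneg _)

variable {𝕜 ι : Type*} [RCLike 𝕜] [InnerProductSpace 𝕜 E]

lemma inner_toLp {f g : α → E} (hf : MemLp f 2 μ) (hg : MemLp g 2 μ) :
    inner 𝕜 (hf.toLp f) (hg.toLp g) = ∫ x, inner 𝕜 (f x) (g x) ∂μ := by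
  rw [L2.inner_def]
  refine integral_congr_ae ?_
  filter_upwards [hf.coeFn_toLp, hg.coeFn_toLp] with x hfx hgx
  rw [hfx, hgx]

lemma sum_sq_norm_integral_inner_le [DecidableEq ι] {e : ι → α → E} {f : α → E}
    (he : ∀ i, MemLp (e i) 2 μ)
    (horth : ∀ i j, ∫ x, inner 𝕜 (e i x) (e j x) ∂μ = if i = j then 1 else 0)
    (hf : MemLp f 2 μ) (s : Finset ι) :
    ∑ i ∈ s, ‖∫ x, inner 𝕜 (e i x) (f x) ∂μ‖ ^ 2 ≤ ∫ x, ‖f x‖ ^ 2 ∂μ := by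
  have hortho : Orthonormal 𝕜 fun i => (he i).toLp :=
    orthonormal_iff_ite.2 fun i j => (inner_toLp (he i) (he j)).trans (horth i j)
  simpa only [inner_toLp, sq_norm_toLp] using hortho.sum_inner_products_le hf.toLp (s := s)

end Bessel

section CauchyTransform

variable {μ : Measure ℝ} {f g : ℝ → ℝ} {z : ℂ} {d : ℝ}

/-- The Cauchy transform `∫ f(x) / (z - x) dμ(x)` of the measure `f μ`; it has the junk value `0`
where the integral diverges. -/
noncomputable def cauchyTransform (μ : Measure ℝ) (f : ℝ → ℝ) (z : ℂ) : ℂ :=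
  ∫ x, (f x : ℂ) / (z - x) ∂μ

lemma cauchyTransform_congr_ae (h : f =ᵐ[μ] g) (z : ℂ) :
    cauchyTransform μ f z = cauchyTransform μ g z :=
  integral_congr_ae (h.mono fun x hx => by simp only [hx])

lemma cauchyTransform_const_mul (c : ℝ) (f : ℝ → ℝ) (z : ℂ) :
    cauchyTransform μ (fun x => c * f x) z = c * cauchyTransform μ f z := by
  simp only [cauchyTransform, ← integral_const_mul, Complex.ofReal_mul, mul_div_assoc]

lemma norm_div_sub_le {x : ℝ} (hd : 0 < d) (hz : d ≤ ‖z - x‖) (y : ℝ) :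
    ‖(y : ℂ) / (z - x)‖ ≤ d⁻¹ * ‖y‖ := by
  rw [norm_div, Complex.norm_real, inv_mul_eq_div]
  gcongr

lemma memLp_div_sub {q : ENNReal} (hd : 0 < d) (hz : ∀ᵐ x : ℝ ∂μ, d ≤ ‖z - x‖)
    (hf : MemLp f q μ) : MemLp (fun x => (f x : ℂ) / (z - x)) q μ := by
  refine hf.of_le_mul (c := d⁻¹) ?_ (hz.mono fun x hx => norm_div_sub_le hd hx (f x))
  have hkernel : Measurable fun x : ℝ => z - x := by fun_prop
  exact (Complex.continuous_ofReal.comp_aestronglyMeasurable hf.1).div₀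
    hkernel.aestronglyMeasurable

lemma integrable_div_sub (hd : 0 < d) (hz : ∀ᵐ x : ℝ ∂μ, d ≤ ‖z - x‖) (hf : Integrable f μ) :
    Integrable (fun x => (f x : ℂ) / (z - x)) μ :=
  memLp_one_iff_integrable.1 (memLp_div_sub hd hz (memLp_one_iff_integrable.2 hf))

lemma cauchyTransform_add (hd : 0 < d) (hz : ∀ᵐ x : ℝ ∂μ, d ≤ ‖z - x‖)
    (hf : Integrable f μ) (hg : Integrable g μ) :
    cauchyTransform μ (fun x => f x + g x) z = cauchyTransform μ f z + cauchyTransform μ g z := by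
  simp only [cauchyTransform, Complex.ofReal_add, add_div]
  exact integral_add (integrable_div_sub hd hz hf) (integrable_div_sub hd hz hg)

lemma cauchyTransform_id_mul (hd : 0 < d) (hz : ∀ᵐ x : ℝ ∂μ, d ≤ ‖z - x‖)
    (hf : Integrable f μ) :
    cauchyTransform μ (fun x => x * f x) z = z * cauchyTransform μ f z - (∫ x, f x ∂μ : ℝ) := by
  rw [cauchyTransform, cauchyTransform, ← integral_const_mul, ← integral_complex_ofReal]
  refine .trans (integral_congr_ae (hz.mono fun x hx => ?_))
    (integral_sub ((integrable_div_sub hd hz hf).const_mul z) hf.ofReal)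
  have hne : z - x ≠ 0 := norm_pos_iff.1 (hd.trans_le hx)
  push_cast
  field_simp
  ring

lemma sum_sq_norm_cauchyTransform_mul_le {ι : Type*} [DecidableEq ι] {e : ι → ℝ → ℝ}
    (he : ∀ i, MemLp (e i) 2 μ) (horth : ∀ i j, ∫ x, e i x * e j x ∂μ = if i = j then 1 else 0)
    (hd : 0 < d) (hz : ∀ᵐ x : ℝ ∂μ, d ≤ ‖z - x‖) (hf : MemLp f 2 μ) (s : Finset ι) :
    ∑ i ∈ s, ‖cauchyTransform μ (fun x => e i x * f x) z‖ ^ 2 ≤ d⁻¹ ^ 2 * ∫ x, f x ^ 2 ∂μ := by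
  have horthC (i j : ι) :
      ∫ x, inner ℂ (e i x : ℂ) (e j x : ℂ) ∂μ = if i = j then 1 else 0 := by
    simp only [RCLike.inner_apply, Complex.conj_ofReal, ← Complex.ofReal_mul, mul_comm (e j _)]
    rw [integral_complex_ofReal, horth]
    split_ifs <;> simp
  have hbessel := sum_sq_norm_integral_inner_le (𝕜 := ℂ) (fun i => (he i).ofReal) horthC
    (memLp_div_sub hd hz hf) s
  have hnorm : ∫ x, ‖(f x : ℂ) / (z - x)‖ ^ 2 ∂μ ≤ d⁻¹ ^ 2 * ∫ x, f x ^ 2 ∂μ := by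
    rw [← integral_const_mul]
    refine integral_mono_of_nonneg (.of_forall fun x => sq_nonneg _)
      (hf.integrable_sq.const_mul _) (hz.mono fun x hx => ?_)
    calc ‖(f x : ℂ) / (z - x)‖ ^ 2 ≤ (d⁻¹ * ‖f x‖) ^ 2 := by
          gcongr
          exact norm_div_sub_le hd hx (f x)
      _ = d⁻¹ ^ 2 * f x ^ 2 := by rw [mul_pow, Real.norm_eq_abs, sq_abs]
  refine le_of_eq_of_le (Finset.sum_congr rfl fun i _ => ?_) (hbessel.trans hnorm)
  simp only [cauchyTransform, RCLike.inner_apply, Complex.conj_ofReal, Complex.ofReal_mul,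
    mul_div_assoc, mul_comm (e i _ : ℂ), div_mul_eq_mul_div]

end CauchyTransform

section JacobiSystem

/-- `e` is an orthonormal system in `L²(μ)` satisfying the three-term recurrence of a Jacobi matrix
with diagonal `b` and off-diagonal `a`, as orthonormal polynomials do. Row `0`, where the recurrence
has a different shape, is left unconstrained. -/
structure IsJacobiSystem (μ : Measure ℝ) (e : ℕ → ℝ → ℝ) (a b : ℕ → ℝ) : Prop where
  memLp : ∀ n, MemLp (e n) 2 μ
  orthonormal : ∀ m n, ∫ x, e m x * e n x ∂μ = if m = n then 1 else 0
  recurrence : ∀ n, ∀ᵐ x ∂μ,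
    x * e (n + 1) x = a (n + 2) * e (n + 2) x + b (n + 1) * e (n + 1) x + a (n + 1) * e n x

/-- The matrix entry `(n + k, n)` of the resolvent `(z - x)⁻¹` in the system `e`. The row index is
truncated to `0` when `n + k < 0`. -/
noncomputable def resolventEntry (μ : Measure ℝ) (e : ℕ → ℝ → ℝ) (k : ℤ) (n : ℕ) (z : ℂ) : ℂ :=
  cauchyTransform μ (fun x => e ((n : ℤ) + k).toNat x * e n x) z

lemma tendsto_natCast_add_toNat (k : ℤ) :
    Tendsto (fun n : ℕ => ((n : ℤ) + k).toNat) atTop atTop :=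
  tendsto_atTop.2 fun N => (eventually_ge_atTop ((N : ℤ) - k).toNat).mono fun n hn => by lia

namespace IsJacobiSystem

variable {μ : Measure ℝ} {e : ℕ → ℝ → ℝ} {a b : ℕ → ℝ} {z : ℂ} {d : ℝ}

lemma sum_sq_norm_resolventEntry_le (he : IsJacobiSystem μ e a b) (hd : 0 < d)
    (hz : ∀ᵐ x : ℝ ∂μ, d ≤ ‖z - x‖) {n : ℕ} {s : Finset ℤ} (hs : ∀ k ∈ s, 0 ≤ n + k) :
    ∑ k ∈ s, ‖resolventEntry μ e k n z‖ ^ 2 ≤ d⁻¹ ^ 2 := by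
  have hinj : InjOn (fun k : ℤ => ((n : ℤ) + k).toNat) s := fun i hi j hj hij => by
    have := hs i hi
    have := hs j hj
    simp only at hij
    lia
  calc ∑ k ∈ s, ‖resolventEntry μ e k n z‖ ^ 2
      = ∑ m ∈ s.image fun k : ℤ => ((n : ℤ) + k).toNat,
          ‖cauchyTransform μ (fun x => e m x * e n x) z‖ ^ 2 := by
        rw [Finset.sum_image hinj]
        rfl
    _ ≤ d⁻¹ ^ 2 * ∫ x, e n x ^ 2 ∂μ :=
        sum_sq_norm_cauchyTransform_mul_le he.memLp he.orthonormal hd hz (he.memLp n) _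
    _ = d⁻¹ ^ 2 := by simp only [sq (e n _), he.orthonormal, if_true, mul_one]

lemma norm_resolventEntry_le (he : IsJacobiSystem μ e a b) (hd : 0 < d)
    (hz : ∀ᵐ x : ℝ ∂μ, d ≤ ‖z - x‖) (k : ℤ) (n : ℕ) : ‖resolventEntry μ e k n z‖ ≤ d⁻¹ := by
  have h := sum_sq_norm_cauchyTransform_mul_le he.memLp he.orthonormal hd hz (he.memLp n)
    {((n : ℤ) + k).toNat}
  simp only [Finset.sum_singleton, sq (e n _), he.orthonormal, if_true, mul_one] at h
  exact le_of_sq_le_sq h (inv_nonneg.2 hd.le)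

lemma mul_cauchyTransform_sub_eq (he : IsJacobiSystem μ e a b) (hd : 0 < d)
    (hz : ∀ᵐ x : ℝ ∂μ, d ≤ ‖z - x‖) (m n : ℕ) :
    z * cauchyTransform μ (fun x => e (m + 1) x * e n x) z - (if m + 1 = n then 1 else 0) =
      a (m + 2) * cauchyTransform μ (fun x => e (m + 2) x * e n x) z +
        b (m + 1) * cauchyTransform μ (fun x => e (m + 1) x * e n x) z +
        a (m + 1) * cauchyTransform μ (fun x => e m x * e n x) z := by
  have hint (j : ℕ) : Integrable (fun x => e j x * e n x) μ :=
    (he.memLp j).integrable_mul (he.memLp n)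
  have hsum : Integrable
      (fun x => a (m + 2) * (e (m + 2) x * e n x) + b (m + 1) * (e (m + 1) x * e n x)) μ :=
    ((hint _).const_mul _).add ((hint _).const_mul _)
  have hrec : (fun x => x * (e (m + 1) x * e n x)) =ᵐ[μ] fun x =>
      a (m + 2) * (e (m + 2) x * e n x) + b (m + 1) * (e (m + 1) x * e n x) +
        a (m + 1) * (e m x * e n x) := by
    filter_upwards [he.recurrence m] with x hx
    linear_combination e n x * hx
  have h := cauchyTransform_id_mul hd hz (hint (m + 1))
  rw [cauchyTransform_congr_ae hrec,
    cauchyTransform_add hd hz hsum ((hint _).const_mul _),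
    cauchyTransform_add hd hz ((hint _).const_mul _) ((hint _).const_mul _)] at h
  simp only [cauchyTransform_const_mul, he.orthonormal, apply_ite Complex.ofReal,
    Complex.ofReal_one, Complex.ofReal_zero] at h
  exact h.symm

lemma mul_resolventEntry_sub_eq (he : IsJacobiSystem μ e a b) (hd : 0 < d)
    (hz : ∀ᵐ x : ℝ ∂μ, d ≤ ‖z - x‖) {k : ℤ} {n : ℕ} (hn : 1 ≤ n + k) :
    z * resolventEntry μ e k n z - (if k = 0 then 1 else 0) =
      a ((n : ℤ) + (k + 1)).toNat * resolventEntry μ e (k + 1) n z +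
        b ((n : ℤ) + k).toNat * resolventEntry μ e k n z +
        a ((n : ℤ) + k).toNat * resolventEntry μ e (k - 1) n z := by
  obtain ⟨m, hm⟩ := Int.eq_ofNat_of_zero_le (sub_nonneg.2 hn)
  have hrow : ((n : ℤ) + k).toNat = m + 1 := by lia
  have hnext : ((n : ℤ) + (k + 1)).toNat = m + 2 := by lia
  have hprev : ((n : ℤ) + (k - 1)).toNat = m := by lia
  have hdiag : k = 0 ↔ m + 1 = n := by lia
  simpa only [resolventEntry, hrow, hnext, hprev, hdiag] using
    he.mul_cauchyTransform_sub_eq hd hz m n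

variable {z₀ : ℂ} {F : Filter (ℕ × ℂ)} [F.NeBot] {g : ℤ → ℂ}

lemma tendsto_cofinite_zero_of_tendsto_resolventEntry (he : IsJacobiSystem μ e a b)
    (hz₀ : z₀ ∉ msuppC μ) (hF : F ≤ atTop ×ˢ 𝓝 z₀)
    (hg : ∀ k, Tendsto (fun p : ℕ × ℂ => resolventEntry μ e k p.1 p.2) F (𝓝 (g k))) :
    Tendsto g cofinite (𝓝 0) := by
  obtain ⟨d, hd, hdist⟩ := exists_pos_forall_ae_le_norm_sub hz₀
  refine tendsto_cofinite_zero_of_sum_sq_norm_le (C := d⁻¹ ^ 2) fun s => ?_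
  refine le_of_tendsto (tendsto_finsetSum s fun k _ => (hg k).norm.pow 2) ?_
  have hrows : ∀ᶠ n : ℕ in atTop, ∀ k ∈ s, 0 ≤ n + k :=
    (s.eventually_all (l := atTop)).2 fun k _ =>
      (eventually_ge_atTop (-k).toNat).mono fun n hn => by lia
  filter_upwards [hF (hrows.prod_mk hdist)] with p hp
  exact he.sum_sq_norm_resolventEntry_le hd hp.2 hp.1

lemma isFreeGreenFunction_of_tendsto_resolventEntry (he : IsJacobiSystem μ e a b)
    (ha : Tendsto a atTop (𝓝 (1 / 2))) (hb : Tendsto b atTop (𝓝 0))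
    (hz₀ : z₀ ∉ msuppC μ) (hF : F ≤ atTop ×ˢ 𝓝 z₀)
    (hg : ∀ k, Tendsto (fun p : ℕ × ℂ => resolventEntry μ e k p.1 p.2) F (𝓝 (g k))) :
    IsFreeGreenFunction z₀ g where
  tendsto_zero := he.tendsto_cofinite_zero_of_tendsto_resolventEntry hz₀ hF hg
  mul_sub_eq k := by
    obtain ⟨d, hd, hdist⟩ := exists_pos_forall_ae_le_norm_sub hz₀
    have hfst : Tendsto Prod.fst F atTop := tendsto_fst.mono_left hF
    have hsnd : Tendsto Prod.snd F (𝓝 z₀) := tendsto_snd.mono_left hF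
    have hcoeff {c : ℕ → ℝ} {c₀ : ℝ} (hc : Tendsto c atTop (𝓝 c₀)) (j : ℤ) :
        Tendsto (fun p : ℕ × ℂ => (c ((p.1 : ℤ) + j).toNat : ℂ)) F (𝓝 c₀) :=
      Complex.continuous_ofReal.continuousAt.tendsto.comp
        (hc.comp ((tendsto_natCast_add_toNat j).comp hfst))
    have hleft := (hsnd.mul (hg k)).sub_const (if k = 0 then 1 else 0)
    have hright := (((hcoeff ha (k + 1)).mul (hg (k + 1))).add ((hcoeff hb k).mul (hg k))).add
      ((hcoeff ha k).mul (hg (k - 1)))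
    have hrow : ∀ᶠ n : ℕ in atTop, 1 ≤ n + k :=
      (eventually_ge_atTop (1 - k).toNat).mono fun n hn => by lia
    have heq := tendsto_nhds_unique_of_eventuallyEq hleft hright <| by
      filter_upwards [hF (hrow.prod_mk hdist)] with p hp
      exact he.mul_resolventEntry_sub_eq hd hp.2 hp.1
    push_cast at heq
    linear_combination heq

lemma tendsto_resolventEntry_freeGreen (he : IsJacobiSystem μ e a b)
    (ha : Tendsto a atTop (𝓝 (1 / 2))) (hb : Tendsto b atTop (𝓝 0)) (hz₀ : z₀ ∉ msuppC μ) :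
    Tendsto (fun (p : ℕ × ℂ) k => resolventEntry μ e k p.1 p.2) (atTop ×ˢ 𝓝 z₀)
      (𝓝 fun k => freeGreen k z₀) := by
  obtain ⟨d, hd, hdist⟩ := exists_pos_forall_ae_le_norm_sub hz₀
  have hcompact : IsCompact (univ.pi fun _ : ℤ => Metric.closedBall (0 : ℂ) d⁻¹) :=
    isCompact_univ_pi fun _ => isCompact_closedBall 0 d⁻¹
  refine hcompact.tendsto_nhds_of_unique_mapClusterPt ?_ fun g _ hg => ?_
  · filter_upwards [hdist.prod_inr atTop] with p hp k _
    exact mem_closedBall_zero_iff.2 (he.norm_resolventEntry_le hd hp k p.1)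
  · obtain ⟨U, hU, hgU⟩ := mapClusterPt_iff_ultrafilter.1 hg
    exact (he.isFreeGreenFunction_of_tendsto_resolventEntry ha hb hz₀ hU
      (tendsto_pi_nhds.1 hgU)).eq_freeGreen

lemma one_lt_norm_phi (he : IsJacobiSystem μ e a b) (ha : Tendsto a atTop (𝓝 (1 / 2)))
    (hb : Tendsto b atTop (𝓝 0)) (hz₀ : z₀ ∉ msuppC μ) : 1 < ‖phi z₀‖ :=
  (he.isFreeGreenFunction_of_tendsto_resolventEntry ha hb hz₀ le_rfl
    (tendsto_pi_nhds.1 (he.tendsto_resolventEntry_freeGreen ha hb hz₀))).one_lt_norm_phi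

lemma tendstoLocallyUniformlyOn_resolventEntry (he : IsJacobiSystem μ e a b)
    (ha : Tendsto a atTop (𝓝 (1 / 2))) (hb : Tendsto b atTop (𝓝 0)) (k : ℤ) :
    TendstoLocallyUniformlyOn (resolventEntry μ e k) (freeGreen k) atTop (msuppC μ)ᶜ := by
  refine tendstoLocallyUniformlyOn_iff_filter.2 fun z₀ hz₀ => ?_
  refine TendstoUniformlyOnFilter.mono_right ?_ nhdsWithin_le_nhds
  exact tendstoUniformlyOnFilter_of_tendsto_nhds
    (tendsto_pi_nhds.1 (he.tendsto_resolventEntry_freeGreen ha hb hz₀) k)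
    (continuousAt_freeGreen k (he.one_lt_norm_phi ha hb hz₀))

lemma tendsto_resolventEntry_cocompact (he : IsJacobiSystem μ e a b) (hμ : IsCompact (msupp μ))
    (k : ℤ) (p : Filter ℕ) :
    Tendsto (fun r : ℕ × ℂ => resolventEntry μ e k r.1 r.2) (p ×ˢ cocompact ℂ) (𝓝 0) := by
  obtain ⟨R, hR⟩ := hμ.exists_bound_of_continuousOn continuousOn_id
  refine squeeze_zero_norm' ?_ ((tendsto_inv_norm_sub_cocompact R).comp tendsto_snd)
  have hfar := (tendsto_norm_cocompact_atTop (E := ℂ)).eventually_gt_atTop R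
  filter_upwards [hfar.prod_inr p] with r hr
  refine he.norm_resolventEntry_le (sub_pos.2 hr) ?_ k r.1
  filter_upwards [ae_mem_msupp μ] with x hx
  have hxR : ‖(x : ℂ)‖ ≤ R := by simpa using hR x hx
  exact (sub_le_sub_left hxR _).trans (norm_sub_norm_le _ _)

end IsJacobiSystem

lemma IsM01.isJacobiSystem {μ : Measure ℝ} [IsFiniteMeasure μ] {l : ℕ → ℝ[X]} {a b : ℕ → ℝ}
    (h : IsM01 μ l a b) (hμ : IsCompact (msupp μ)) :
    IsJacobiSystem μ (fun n x => (l n).eval x) a b where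
  memLp n := memLp_of_isCompact_msupp hμ (l n).continuous 2
  orthonormal := h.onp.orthonormal
  recurrence n := .of_forall fun x => by
    simpa [eval_smul] using congrArg (eval x) (h.recurrence n)

end JacobiSystem

theorem cauchy_transform_product_asymptotics_general {μ : Measure ℝ} {e : ℕ → ℝ → ℝ}
    {a b : ℕ → ℝ} (hμ : IsCompact (msupp μ)) (he : IsJacobiSystem μ e a b)
    (ha : Tendsto a atTop (𝓝 (1 / 2))) (hb : Tendsto b atTop (𝓝 0)) (k : ℤ) {F : Set ℂ}
    (hF : IsClosed F) (hFμ : F ⊆ (msuppC μ)ᶜ) :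
    TendstoUniformlyOn (resolventEntry μ e k) (freeGreen k) atTop F :=
  tendstoUniformlyOn_of_tendstoLocallyUniformlyOn_of_cocompact hF
    ((he.tendstoLocallyUniformlyOn_resolventEntry ha hb k).mono hFμ)
    (tendstoUniformlyOnFilter_of_tendsto_nhds (he.tendsto_resolventEntry_cocompact hμ k atTop)
      (tendsto_freeGreen_cocompact k))

/-- Lemma 2. For `μ ∈ M(0,1)` and every fixed `ν ∈ ℤ`,
`∫ l_{n+ν}(x) l_n(x)/(z-x) dμ(x) ⇉ 1/(φ(z)^{|ν|}·√(z²-1))` on compact subsets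
of `ℂ̄ ∖ S_μ` (compact subsets of the sphere correspond to closed subsets of
ℂ avoiding S_μ). -/
theorem cauchy_transform_product_asymptotics
    (μ : Measure ℝ) [IsFiniteMeasure μ] (l : ℕ → Polynomial ℝ) (a b : ℕ → ℝ)
    (hcompact : IsCompact (msupp μ)) (hinf : (msupp μ).Infinite)
    (hM01 : IsM01 μ l a b) :
    ∀ ν : ℤ, ∀ F : Set ℂ, IsClosed F → F ⊆ (msuppC μ)ᶜ →
      TendstoUniformlyOn
        (fun (n : ℕ) (z : ℂ) =>
          ∫ x, ((((l ((n : ℤ) + ν).toNat).eval x * (l n).eval x : ℝ) : ℂ) / (z - x)) ∂μ)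
        (fun z => 1 / (phi z ^ ν.natAbs * sqrtB z)) atTop F := by
  intro ν F hF hFμ
  exact cauchy_transform_product_asymptotics_general hcompact (hM01.isJacobiSystem hcompact)
    hM01.tendsto_a hM01.tendsto_b ν hF hFμ
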